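/- Let d ≥ 1, 2 ≤ p < ∞, and k₂ ∈ ℝ. Suppose there exists a constant C > 0 such that ‖(1−Δ)^{k₂/2}(ℱf)‖_{L^p(ℝ^d)} ≤ C·‖f‖_{L^p(ℝ^d)} for every Schwartz function f on ℝ^d whose Fourier transform ℱf is supported in the closed unit ball {|ξ| ≤ 1}. Then k₂ ≤ −2d(1/2 − 1/p). -/

import Mathlib

open MeasureTheory Complex Real
open scoped ENNReal RealInnerProductSpace

noncomputable section

abbrev E (d : ℕ) : Type := EuclideanSpace ℝ (Fin d)

/-- The Fourier transform `ℱu(ξ) = ∫ exp(-i x·ξ) u(x) dx`. -/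
def FT (d : ℕ) (u : E d → ℂ) (ξ : E d) : ℂ :=
  ∫ x, Complex.exp (-Complex.I * (⟪x, ξ⟫ : ℂ)) * u x

/-- The Bessel potential `(1-Δ)^{k/2} u = ℱ⁻¹((1+|ξ|²)^{k/2} ℱu)`. -/
def bessel (d : ℕ) (k : ℝ) (u : E d → ℂ) (x : E d) : ℂ :=
  (((2 * π) ^ d : ℝ) : ℂ)⁻¹ *
    ∫ ξ, Complex.exp (Complex.I * (⟪x, ξ⟫ : ℂ)) * (((1 + ‖ξ‖ ^ 2) ^ (k / 2) : ℝ) : ℂ) *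
      FT d u ξ

/-
For Schwartz `f`, Fourier inversion gives `⟨D⟩^k ℱf = ℱ(⟨·⟩^k f)`. Test the estimate on
`g(·/r)`, `r ≥ 1`, with `g ≥ 0` band-limited: the left side is `r^d ℱ(⟨r·⟩^k g)(rx)`. Since
`r|ξ| ≤ ⟨rξ⟩ ≤ r⟨ξ⟩`, the mass `I(r) = ∫ ⟨rξ⟩^k g` is at least `c r^k`, and the first moment
`∫ |ξ| ⟨rξ⟩^k g` is at most `K I(r)` with `K` independent of `r`. The transform of a nonnegative
function is its mass at the origin and has its first moment as a Lipschitz constant, so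
`|ℱ(⟨r·⟩^k g)| ≥ I(r)/2` on a ball independent of `r`. Taking norms over
`|rx| ≤ δ`, the estimate becomes `c r^(d+k-d/p) ≤ C r^(d/p)`; let `r → ∞`.
-/

open Filter Metric
open scoped FourierTransform SchwartzMap ContDiff ComplexOrder

theorem le_of_forall_mul_rpow_le_mul_rpow {c K s t : ℝ} (hc : 0 < c)
    (h : ∀ r : ℝ, 1 ≤ r → c * r ^ s ≤ K * r ^ t) : s ≤ t := by
  by_contra! hst
  obtain ⟨r, hr, hr1⟩ := (((tendsto_rpow_atTop (sub_pos.2 hst)).eventually_gt_atTop (K / c)).and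
    (eventually_ge_atTop 1)).exists
  have hr0 : 0 < r := by linarith
  rw [Real.rpow_sub hr0, div_lt_div_iff₀ hc (by positivity)] at hr
  linarith [h r hr1]

theorem min_rpow_rpow_le_rpow {a t b : ℝ} (k : ℝ) (ha : 0 ≤ a) (hat : a ≤ t) (ht : 0 < t)
    (htb : t ≤ b) : min (a ^ k) (b ^ k) ≤ t ^ k := by
  rcases le_total 0 k with hk | hk
  · exact min_le_of_left_le (Real.rpow_le_rpow ha hat hk)
  · exact min_le_of_right_le (Real.rpow_le_rpow_of_nonpos ht htb hk)

theorem rpow_le_max_rpow_rpow {a t b : ℝ} (k : ℝ) (ha : 0 < a) (hat : a ≤ t) (htb : t ≤ b) :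
    t ^ k ≤ max (a ^ k) (b ^ k) := by
  rcases le_total 0 k with hk | hk
  · exact le_max_of_le_right (Real.rpow_le_rpow (ha.le.trans hat) htb hk)
  · exact le_max_of_le_left (Real.rpow_le_rpow_of_nonpos ha hat hk)

section JapaneseBracket

variable {V : Type*} [NormedAddCommGroup V]

/-- The Japanese bracket `⟨ξ⟩ = (1 + |ξ|²)^{1/2}`; its powers are the symbols of the Bessel
potentials. -/
def japaneseBracket (ξ : V) : ℝ := √(1 + ‖ξ‖ ^ 2)

theorem japaneseBracket_rpow (k : ℝ) (ξ : V) :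
    japaneseBracket ξ ^ k = (1 + ‖ξ‖ ^ 2) ^ (k / 2) := by
  rw [japaneseBracket, Real.sqrt_eq_rpow, ← Real.rpow_mul (by positivity)]
  congr 1
  ring

theorem one_le_japaneseBracket (ξ : V) : 1 ≤ japaneseBracket ξ :=
  Real.one_le_sqrt.2 (by linarith [sq_nonneg ‖ξ‖])

theorem japaneseBracket_pos (ξ : V) : 0 < japaneseBracket ξ :=
  one_pos.trans_le (one_le_japaneseBracket ξ)

theorem norm_le_japaneseBracket (ξ : V) : ‖ξ‖ ≤ japaneseBracket ξ :=
  Real.le_sqrt_of_sq_le (by linarith)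

theorem continuous_japaneseBracket : Continuous (japaneseBracket : V → ℝ) := by
  unfold japaneseBracket
  fun_prop

section Dilation

variable [NormedSpace ℝ V] {r : ℝ} (k : ℝ)

theorem japaneseBracket_smul_le (hr : 1 ≤ r) (ξ : V) :
    japaneseBracket (r • ξ) ≤ r * japaneseBracket ξ := by
  refine Real.sqrt_le_iff.2 ⟨mul_nonneg (by linarith) (japaneseBracket_pos ξ).le, ?_⟩
  rw [mul_pow, japaneseBracket, Real.sq_sqrt (by positivity), norm_smul, mul_pow, Real.norm_eq_abs,
    sq_abs]
  nlinarith

theorem mul_norm_le_japaneseBracket_smul (hr : 0 ≤ r) (ξ : V) :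
    r * ‖ξ‖ ≤ japaneseBracket (r • ξ) := by
  simpa only [norm_smul, Real.norm_of_nonneg hr] using norm_le_japaneseBracket (r • ξ)

theorem rpow_mul_min_le_japaneseBracket_smul_rpow (hr : 1 ≤ r) (ξ : V) :
    r ^ k * min (‖ξ‖ ^ k) (japaneseBracket ξ ^ k) ≤ japaneseBracket (r • ξ) ^ k := by
  have hr0 : 0 ≤ r := by linarith
  rw [mul_min_of_nonneg _ _ (by positivity), ← Real.mul_rpow hr0 (norm_nonneg ξ),
    ← Real.mul_rpow hr0 (japaneseBracket_pos ξ).le]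
  exact min_rpow_rpow_le_rpow k (by positivity) (mul_norm_le_japaneseBracket_smul hr0 ξ)
    (japaneseBracket_pos _) (japaneseBracket_smul_le hr ξ)

theorem japaneseBracket_smul_rpow_le (hr : 1 ≤ r) {ξ : V} (hξ : 1 ≤ ‖ξ‖) :
    japaneseBracket (r • ξ) ^ k ≤ r ^ k * japaneseBracket ξ ^ |k| := by
  have hr0 : 0 < r := by linarith
  have rpow_le_bracket {a : ℝ} (ha : 1 ≤ a) (hab : a ≤ japaneseBracket ξ) :
      a ^ k ≤ japaneseBracket ξ ^ |k| :=
    (Real.rpow_le_rpow_of_exponent_le ha (le_abs_self k)).trans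
      (Real.rpow_le_rpow (by linarith) hab (abs_nonneg k))
  calc japaneseBracket (r • ξ) ^ k
      ≤ max ((r * ‖ξ‖) ^ k) ((r * japaneseBracket ξ) ^ k) :=
        rpow_le_max_rpow_rpow k (by positivity) (mul_norm_le_japaneseBracket_smul hr0.le ξ)
          (japaneseBracket_smul_le hr ξ)
    _ = r ^ k * max (‖ξ‖ ^ k) (japaneseBracket ξ ^ k) := by
        rw [mul_max_of_nonneg _ _ (by positivity), Real.mul_rpow hr0.le (norm_nonneg ξ),
          Real.mul_rpow hr0.le (japaneseBracket_pos ξ).le]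
    _ ≤ r ^ k * japaneseBracket ξ ^ |k| := by
        gcongr
        exact max_le (rpow_le_bracket hξ (norm_le_japaneseBracket ξ))
          (rpow_le_bracket (one_le_japaneseBracket ξ) le_rfl)

theorem norm_mul_japaneseBracket_smul_rpow_le (hr : 1 ≤ r) (ξ : V) :
    ‖ξ‖ * japaneseBracket (r • ξ) ^ k ≤
      japaneseBracket (r • ξ) ^ k + r ^ k * japaneseBracket ξ ^ (|k| + 1) := by
  have hb := japaneseBracket_pos ξ
  have hrb := japaneseBracket_pos (r • ξ)
  have : 0 < r := by linarith
  rcases le_total ‖ξ‖ 1 with hξ | hξ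
  · exact le_add_of_le_of_nonneg (mul_le_of_le_one_left (by positivity) hξ) (by positivity)
  · refine le_add_of_nonneg_of_le (by positivity) ?_
    calc ‖ξ‖ * japaneseBracket (r • ξ) ^ k
        ≤ japaneseBracket ξ * (r ^ k * japaneseBracket ξ ^ |k|) := by
          gcongr
          · exact norm_le_japaneseBracket ξ
          · exact japaneseBracket_smul_rpow_le k hr hξ
      _ = r ^ k * japaneseBracket ξ ^ (|k| + 1) := by
          rw [Real.rpow_add_one hb.ne']
          ring

end Dilation

end JapaneseBracket

section WeightedSchwartz

variable {V F : Type*} [NormedAddCommGroup V] [InnerProductSpace ℝ V] [NormedAddCommGroup F]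
  [NormedSpace ℝ F]

theorem hasTemperateGrowth_japaneseBracket_smul_rpow (k r : ℝ) :
    (fun ξ : V => japaneseBracket (r • ξ) ^ k).HasTemperateGrowth := by
  simp only [japaneseBracket_rpow]
  exact (Function.hasTemperateGrowth_one_add_norm_sq_rpow V (k / 2)).comp
    (r • ContinuousLinearMap.id ℝ V).hasTemperateGrowth

/-- The Schwartz function `ξ ↦ ⟨rξ⟩^k g(ξ)`. -/
def bracketMul (k r : ℝ) (g : 𝓢(V, F)) : 𝓢(V, F) :=
  SchwartzMap.smulLeftCLM F (fun ξ : V => japaneseBracket (r • ξ) ^ k) g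

theorem bracketMul_apply (k r : ℝ) (g : 𝓢(V, F)) (ξ : V) :
    bracketMul k r g ξ = japaneseBracket (r • ξ) ^ k • g ξ :=
  SchwartzMap.smulLeftCLM_apply_apply (hasTemperateGrowth_japaneseBracket_smul_rpow k r) g ξ

theorem norm_bracketMul_apply (k r : ℝ) (g : 𝓢(V, F)) (ξ : V) :
    ‖bracketMul k r g ξ‖ = japaneseBracket (r • ξ) ^ k * ‖g ξ‖ := by
  rw [bracketMul_apply, norm_smul,
    Real.norm_of_nonneg (Real.rpow_nonneg (japaneseBracket_pos _).le k)]

theorem norm_mul_norm_bracketMul_le (k : ℝ) {r : ℝ} (hr : 1 ≤ r) (g : 𝓢(V, F)) (ξ : V) :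
    ‖ξ‖ * ‖bracketMul k r g ξ‖ ≤
      ‖bracketMul k r g ξ‖ + r ^ k * ‖bracketMul (|k| + 1) 1 g ξ‖ := by
  simp only [norm_bracketMul_apply, one_smul, ← mul_assoc, ← add_mul]
  gcongr
  exact norm_mul_japaneseBracket_smul_rpow_le k hr ξ

/-- The dilation `x ↦ g(ax)` of a Schwartz function. -/
def dilate (a : ℝˣ) (g : 𝓢(V, F)) : 𝓢(V, F) :=
  SchwartzMap.compCLMOfContinuousLinearEquiv ℝ (ContinuousLinearEquiv.smulLeft a : V ≃L[ℝ] V) g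

theorem dilate_apply (a : ℝˣ) (g : 𝓢(V, F)) (x : V) : dilate a g x = g ((a : ℝ) • x) := rfl

theorem bracketMul_dilate (k : ℝ) (a : ℝˣ) (g : 𝓢(V, F)) :
    bracketMul k 1 (dilate a⁻¹ g) = dilate a⁻¹ (bracketMul k a g) := by
  ext ξ
  simp [bracketMul_apply, dilate_apply, smul_smul]

variable [MeasurableSpace V] [BorelSpace V] [SecondCountableTopology V] {μ : Measure V}
  [μ.HasTemperateGrowth] [NullSingletonClass μ] [μ.IsOpenPosMeasure]

theorem integral_min_rpow_mul_norm_pos (k : ℝ) {g : 𝓢(V, F)} (hg : g ≠ 0) :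
    0 < ∫ ξ, min (‖ξ‖ ^ k) (japaneseBracket ξ ^ k) * ‖g ξ‖ ∂μ := by
  have hnonneg (ξ : V) : 0 ≤ min (‖ξ‖ ^ k) (japaneseBracket ξ ^ k) * ‖g ξ‖ := by
    have := japaneseBracket_pos ξ
    positivity
  have hint : Integrable (fun ξ => min (‖ξ‖ ^ k) (japaneseBracket ξ ^ k) * ‖g ξ‖) μ := by
    refine (bracketMul k 1 g).integrable.norm.mono' ?_ (.of_forall fun ξ => ?_)
    · have hbracket := (continuous_japaneseBracket (V := V)).measurable
      exact (((measurable_norm.pow_const k).min (hbracket.pow_const k)).mul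
        g.continuous.norm.measurable).aestronglyMeasurable
    · rw [Real.norm_of_nonneg (hnonneg ξ), norm_bracketMul_apply, one_smul]
      gcongr
      exact min_le_right _ _
  have hsupp : Function.support g \ {0} ⊆
      Function.support fun ξ => min (‖ξ‖ ^ k) (japaneseBracket ξ ^ k) * ‖g ξ‖ := by
    rintro ξ ⟨hgξ, hξ⟩
    have := japaneseBracket_pos ξ
    have := norm_pos_iff.2 hξ
    have := norm_pos_iff.2 hgξ
    exact (by positivity : 0 < min (‖ξ‖ ^ k) (japaneseBracket ξ ^ k) * ‖g ξ‖).ne'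
  have hne : (Function.support g).Nonempty :=
    Function.support_nonempty_iff.2 fun h => hg (DFunLike.coe_injective h)
  rw [integral_pos_iff_support_of_nonneg hnonneg hint]
  calc 0 < μ (Function.support g) := g.continuous.isOpen_support.measure_pos μ hne
    _ = μ (Function.support g \ {0}) := (measure_sdiff_null (measure_singleton 0)).symm
    _ ≤ _ := measure_mono hsupp

theorem exists_forall_mul_rpow_le_integral_norm_bracketMul (k : ℝ) {g : 𝓢(V, F)} (hg : g ≠ 0) :
    ∃ c > 0, ∀ r : ℝ, 1 ≤ r → c * r ^ k ≤ ∫ ξ, ‖bracketMul k r g ξ‖ ∂μ := by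
  refine ⟨_, integral_min_rpow_mul_norm_pos (μ := μ) k hg, fun r hr => ?_⟩
  have : 0 ≤ r := by linarith
  rw [mul_comm, ← integral_const_mul]
  refine integral_mono_of_nonneg (.of_forall fun ξ => ?_) (bracketMul k r g).integrable.norm
    (.of_forall fun ξ => ?_)
  · have := japaneseBracket_pos ξ
    exact (by positivity : 0 ≤ r ^ k * (min (‖ξ‖ ^ k) (japaneseBracket ξ ^ k) * ‖g ξ‖))
  · simp only [norm_bracketMul_apply, ← mul_assoc]
    gcongr
    exact rpow_mul_min_le_japaneseBracket_smul_rpow k hr ξ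

theorem exists_forall_integral_norm_mul_norm_bracketMul_le (k : ℝ) {g : 𝓢(V, F)} (hg : g ≠ 0) :
    ∃ K, ∀ r : ℝ, 1 ≤ r →
      ∫ ξ, ‖ξ‖ * ‖bracketMul k r g ξ‖ ∂μ ≤ K * ∫ ξ, ‖bracketMul k r g ξ‖ ∂μ := by
  obtain ⟨c, hc, hlower⟩ := exists_forall_mul_rpow_le_integral_norm_bracketMul (μ := μ) k hg
  set M := ∫ ξ, ‖bracketMul (|k| + 1) 1 g ξ‖ ∂μ
  have : 0 ≤ M := by positivity
  refine ⟨1 + M / c, fun r hr => ?_⟩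
  set I := ∫ ξ, ‖bracketMul k r g ξ‖ ∂μ
  have hint : Integrable (fun ξ => ‖bracketMul k r g ξ‖) μ := (bracketMul k r g).integrable.norm
  have hint' : Integrable (fun ξ => r ^ k * ‖bracketMul (|k| + 1) 1 g ξ‖) μ :=
    (bracketMul (|k| + 1) 1 g).integrable.norm.const_mul _
  calc ∫ ξ, ‖ξ‖ * ‖bracketMul k r g ξ‖ ∂μ
      ≤ ∫ ξ, ‖bracketMul k r g ξ‖ + r ^ k * ‖bracketMul (|k| + 1) 1 g ξ‖ ∂μ :=
        integral_mono (by simpa only [pow_one] using (bracketMul k r g).integrable_pow_mul μ 1)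
          (hint.add hint') (norm_mul_norm_bracketMul_le k hr g)
    _ = I + r ^ k * M := by rw [integral_add hint hint', integral_const_mul]
    _ ≤ I + I / c * M := by
        gcongr
        rw [le_div_iff₀ hc, mul_comm]
        exact hlower r hr
    _ = (1 + M / c) * I := by ring

end WeightedSchwartz

section BandLimited

variable {V : Type*} [NormedAddCommGroup V] [InnerProductSpace ℝ V] [FiniteDimensional ℝ V]
  [MeasurableSpace V] [BorelSpace V]

theorem fourier_fourier_apply {F : Type*} [NormedAddCommGroup F] [NormedSpace ℂ F]
    [CompleteSpace F] {u : V → F} (hc : Continuous u) (hu : Integrable u)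
    (hFu : Integrable (𝓕 u)) (ξ : V) : 𝓕 (𝓕 u) ξ = u (-ξ) := by
  rw [← congr_fun (hc.fourierInv_fourier_eq hu hFu) (-ξ), Real.fourierInv_eq_fourier_neg, neg_neg]

theorem conj_fourier_of_conj_eq_neg {u : V → ℂ} (hu : ∀ x, starRingEnd ℂ (u x) = u (-x)) (ξ : V) :
    starRingEnd ℂ (𝓕 u ξ) = 𝓕 u ξ := by
  rw [Real.fourier_eq', ← integral_conj, ← integral_neg_eq_self]
  refine integral_congr_ae (.of_forall fun x => ?_)
  simp only [smul_eq_mul, map_mul, hu, neg_neg, ← Complex.exp_conj, inner_neg_left, conj_ofReal,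
    conj_I, mul_neg, ofReal_neg, neg_mul]

theorem exists_hermitian_schwartz_support_subset_closedBall {ρ : ℝ} (hρ : 0 < ρ) :
    ∃ b : 𝓢(V, ℂ), (∀ x, starRingEnd ℂ (b x) = b (-x)) ∧
      Function.support b ⊆ closedBall 0 ρ ∧ 𝓕 b 0 ≠ 0 := by
  let β : ContDiffBump (0 : V) := ⟨ρ / 2, ρ, by positivity, by linarith⟩
  have hsupp : HasCompactSupport fun x => (β x : ℂ) :=
    β.hasCompactSupport.comp_left (g := Complex.ofReal) Complex.ofReal_zero
  have hsmooth : ContDiff ℝ ∞ fun x => (β x : ℂ) := Complex.ofRealCLM.contDiff.comp β.contDiff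
  refine ⟨hsupp.toSchwartzMap hsmooth, fun x => ?_, fun x hx => ?_, ?_⟩
  · simp [β.neg]
  · have hβx : x ∈ Function.support β := by simpa using hx
    rw [β.support_eq] at hβx
    exact ball_subset_closedBall hβx
  · have hint : 𝓕 (hsupp.toSchwartzMap hsmooth) 0 = ((∫ x, β x : ℝ) : ℂ) := by
      simp [SchwartzMap.fourier_coe, Real.fourier_eq', integral_complex_ofReal]
    rw [hint]
    exact_mod_cast β.integral_pos.ne'

-- The square of a real-valued `𝓕 b` is the transform of `b ⋆ b`.
theorem exists_nonneg_schwartz_support_fourier_subset_closedBall {ρ : ℝ} (hρ : 0 < ρ) :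
    ∃ g : 𝓢(V, ℂ), g ≠ 0 ∧ (∀ x, 0 ≤ g x) ∧ Function.support (𝓕 (g : V → ℂ)) ⊆ closedBall 0 ρ := by
  obtain ⟨b, hherm, hsupp, hb0⟩ :=
    exists_hermitian_schwartz_support_subset_closedBall (V := V) (half_pos hρ)
  let B := ContinuousLinearMap.mul ℂ ℂ
  have hsq (x : V) : 𝓕 (SchwartzMap.convolution B b b) x = 𝓕 b x * 𝓕 b x := by
    simp [B, SchwartzMap.fourier_convolution]
  refine ⟨𝓕 (SchwartzMap.convolution B b b), fun h => ?_, fun x => ?_, fun ξ hξ => ?_⟩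
  · exact mul_ne_zero hb0 hb0 (by rw [← hsq, h, zero_apply])
  · have hreal : star (𝓕 b x) = 𝓕 b x := conj_fourier_of_conj_eq_neg hherm x
    simpa only [hsq, hreal] using star_mul_self_nonneg (𝓕 b x)
  · rw [Function.mem_support, SchwartzMap.fourier_coe, fourier_fourier_apply
      (SchwartzMap.continuous _) (SchwartzMap.integrable _)
      (𝓕 (SchwartzMap.convolution B b b)).integrable, SchwartzMap.convolution_apply] at hξ
    obtain ⟨x, hx, y, hy, hxy⟩ := support_convolution_subset B hξ
    have hx' := mem_closedBall_zero_iff.1 (hsupp hx)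
    have hy' := mem_closedBall_zero_iff.1 (hsupp hy)
    rw [mem_closedBall_zero_iff, ← norm_neg, ← hxy]
    exact (norm_add_le x y).trans (by linarith)

end BandLimited

theorem mul_measureReal_rpow_le_integral_norm_rpow {X F : Type*} [MeasurableSpace X]
    {μ : Measure X} [NormedAddCommGroup F] {f : X → F} {s : Set X} {m p : ℝ} (hp : 0 < p)
    (hm : 0 ≤ m) (hs : MeasurableSet s) (hμs : μ s ≠ ⊤)
    (hf : Integrable (fun x => ‖f x‖ ^ p) μ) (hmf : ∀ x ∈ s, m ≤ ‖f x‖) :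
    m * μ.real s ^ (1 / p) ≤ (∫ x, ‖f x‖ ^ p ∂μ) ^ (1 / p) := by
  calc m * μ.real s ^ (1 / p) = (m ^ p * μ.real s) ^ (1 / p) := by
        rw [Real.mul_rpow (by positivity) measureReal_nonneg, ← Real.rpow_mul hm,
          mul_one_div_cancel hp.ne', Real.rpow_one]
    _ ≤ (∫ x in s, ‖f x‖ ^ p ∂μ) ^ (1 / p) := by
        gcongr
        exact setIntegral_ge_of_const_le_real hs hμs
          (fun x hx => Real.rpow_le_rpow hm (hmf x hx) hp.le) hf.integrableOn
    _ ≤ (∫ x, ‖f x‖ ^ p ∂μ) ^ (1 / p) := by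
        gcongr
        · exact .of_forall fun x => by positivity
        · exact Measure.restrict_le_self

section FourierTransform

variable {d : ℕ}

theorem FT_eq_fourier (u : E d → ℂ) (ξ : E d) : FT d u ξ = 𝓕 u ((2 * π)⁻¹ • ξ) := by
  have hphase (x : E d) : -2 * π * ⟪x, (2 * π)⁻¹ • ξ⟫ = -⟪x, ξ⟫ := by
    rw [inner_smul_right]
    field_simp
  rw [FT, Real.fourier_eq']
  refine integral_congr_ae (.of_forall fun x => ?_)
  simp only [hphase, smul_eq_mul]
  rw [ofReal_neg, neg_mul, neg_mul, mul_comm I]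

theorem FT_comp_smul {a : ℝ} (ha : a ≠ 0) (u : E d → ℂ) (ξ : E d) :
    FT d (fun x => u (a • x)) ξ = (|(a ^ d)⁻¹| : ℝ) * FT d u (a⁻¹ • ξ) := by
  have hphase (x : E d) : ⟪a • x, a⁻¹ • ξ⟫ = ⟪x, ξ⟫ := by
    rw [inner_smul_left, inner_smul_right]
    simp [ha]
  have hchange := Measure.integral_comp_smul (volume : Measure (E d))
    (fun x => cexp (-I * (⟪x, a⁻¹ • ξ⟫ : ℂ)) * u x) a
  simpa only [FT, hphase, finrank_euclideanSpace, Fintype.card_fin, real_smul] using hchange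

theorem FT_FT {u : E d → ℂ} (hc : Continuous u) (hu : Integrable u) (hFu : Integrable (𝓕 u))
    (ξ : E d) : FT d (FT d u) ξ = ((2 * π) ^ d : ℝ) * u (-ξ) := by
  have hpi : (2 * π)⁻¹ ≠ 0 := by positivity
  calc FT d (FT d u) ξ = FT d (fun x => 𝓕 u ((2 * π)⁻¹ • x)) ξ := by
        rw [funext (FT_eq_fourier u)]
    _ = ((2 * π) ^ d : ℝ) * 𝓕 (𝓕 u) ξ := by
        rw [FT_comp_smul hpi, FT_eq_fourier, smul_smul, mul_inv_cancel₀ hpi, one_smul,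
          inv_pow, inv_inv, abs_of_pos (by positivity)]
    _ = ((2 * π) ^ d : ℝ) * u (-ξ) := by
        rw [fourier_fourier_apply hc hu hFu]

theorem bessel_FT {u : E d → ℂ} (hc : Continuous u) (hu : Integrable u) (hFu : Integrable (𝓕 u))
    (k : ℝ) (x : E d) :
    bessel d k (FT d u) x = FT d (fun ξ => japaneseBracket ξ ^ k • u ξ) x := by
  have hpi : (((2 * π) ^ d : ℝ) : ℂ) ≠ 0 :=
    ofReal_ne_zero.2 (by positivity)
  rw [bessel, FT, ← integral_neg_eq_self, ← integral_const_mul]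
  refine integral_congr_ae (.of_forall fun ξ => ?_)
  simp only [FT_FT hc hu hFu, japaneseBracket_rpow, real_smul, norm_neg, neg_neg, inner_neg_right,
    real_inner_comm, ofReal_neg]
  field_simp

theorem norm_FT_sub_FT_zero_le {u : E d → ℂ} (hu : Integrable u)
    (hu' : Integrable fun ξ => ‖ξ‖ * ‖u ξ‖) (x : E d) :
    ‖FT d u x - FT d u 0‖ ≤ ‖x‖ * ∫ ξ, ‖ξ‖ * ‖u ξ‖ := by
  have hphase (y ξ : E d) : -I * (⟪ξ, y⟫ : ℂ) = I * ((-⟪ξ, y⟫ : ℝ) : ℂ) := by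
    push_cast
    ring
  have hint (y : E d) : Integrable fun ξ => cexp (-I * (⟪ξ, y⟫ : ℂ)) * u ξ := by
    refine hu.bdd_mul (c := 1) (by fun_prop) (.of_forall fun ξ => ?_)
    rw [hphase, Complex.norm_exp_I_mul_ofReal]
  rw [FT, FT, ← integral_sub (hint x) (hint 0), ← integral_const_mul]
  refine norm_integral_le_of_norm_le (hu'.const_mul _) (.of_forall fun ξ => ?_)
  calc ‖cexp (-I * (⟪ξ, x⟫ : ℂ)) * u ξ - cexp (-I * (⟪ξ, (0 : E d)⟫ : ℂ)) * u ξ‖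
      = ‖cexp (I * ((-⟪ξ, x⟫ : ℝ) : ℂ)) - 1‖ * ‖u ξ‖ := by
        rw [← sub_mul, norm_mul, hphase, inner_zero_right, ofReal_zero, mul_zero, Complex.exp_zero]
    _ ≤ (‖ξ‖ * ‖x‖) * ‖u ξ‖ := by
        gcongr
        refine Real.norm_exp_I_mul_ofReal_sub_one_le.trans ?_
        rw [norm_neg]
        exact norm_inner_le_norm ξ x
    _ = ‖x‖ * (‖ξ‖ * ‖u ξ‖) := by ring

theorem FT_zero_of_nonneg {u : E d → ℂ} (hu : ∀ ξ, 0 ≤ u ξ) : FT d u 0 = (∫ ξ, ‖u ξ‖ : ℝ) := by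
  simp only [FT, inner_zero_right, ofReal_zero, mul_zero, Complex.exp_zero, one_mul,
    ← integral_complex_ofReal]
  exact integral_congr_ae (.of_forall fun ξ => (RCLike.norm_of_nonneg' (hu ξ)).symm)

theorem integral_norm_le_two_mul_norm_FT {u : E d → ℂ} {K : ℝ} (hu0 : ∀ ξ, 0 ≤ u ξ)
    (hu : Integrable u) (hu' : Integrable fun ξ => ‖ξ‖ * ‖u ξ‖)
    (hK : ∫ ξ, ‖ξ‖ * ‖u ξ‖ ≤ K * ∫ ξ, ‖u ξ‖) {x : E d} (hx : ‖x‖ * K ≤ 1 / 2) :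
    ∫ ξ, ‖u ξ‖ ≤ 2 * ‖FT d u x‖ := by
  have hI : 0 ≤ ∫ ξ, ‖u ξ‖ := by positivity
  have hzero : ‖FT d u 0‖ = ∫ ξ, ‖u ξ‖ := by
    rw [FT_zero_of_nonneg hu0, norm_real, Real.norm_of_nonneg hI]
  have hdiff : ‖FT d u x - FT d u 0‖ ≤ 1 / 2 * ∫ ξ, ‖u ξ‖ :=
    calc ‖FT d u x - FT d u 0‖ ≤ ‖x‖ * ∫ ξ, ‖ξ‖ * ‖u ξ‖ := norm_FT_sub_FT_zero_le hu hu' x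
      _ ≤ ‖x‖ * (K * ∫ ξ, ‖u ξ‖) := by gcongr
      _ = ‖x‖ * K * ∫ ξ, ‖u ξ‖ := by ring
      _ ≤ 1 / 2 * ∫ ξ, ‖u ξ‖ := by gcongr
  linarith [norm_sub_norm_le (FT d u 0) (FT d u x), norm_sub_rev (FT d u 0) (FT d u x)]

theorem integrable_norm_FT_rpow (f : 𝓢(E d, ℂ)) {p : ℝ} (hp : 0 < p) :
    Integrable fun x => ‖FT d f x‖ ^ p := by
  have hint : Integrable fun x => ‖𝓕 f x‖ ^ (ENNReal.ofReal p).toReal :=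
    ((𝓕 f).memLp _).integrable_norm_rpow (by simpa using hp) ENNReal.ofReal_ne_top
  rw [ENNReal.toReal_ofReal hp.le] at hint
  simp only [FT_eq_fourier]
  exact hint.comp_smul (inv_ne_zero two_pi_pos.ne')

end FourierTransform

section DilatedFamily

variable {d : ℕ} {g : 𝓢(E d, ℂ)}

theorem bessel_FT_schwartz (k : ℝ) (f : 𝓢(E d, ℂ)) :
    bessel d k (FT d f) = FT d (bracketMul k 1 f) := by
  funext x
  rw [bessel_FT f.continuous f.integrable (𝓕 f).integrable]
  congr 1
  funext ξ
  rw [bracketMul_apply, one_smul]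

theorem FT_dilate_inv (a : ℝˣ) (f : 𝓢(E d, ℂ)) (ξ : E d) :
    FT d (dilate a⁻¹ f) ξ = (|(a : ℝ) ^ d| : ℝ) * FT d f ((a : ℝ) • ξ) := by
  have h := FT_comp_smul (inv_ne_zero a.ne_zero) f ξ
  rw [inv_pow, inv_inv, inv_inv, ← Units.val_inv_eq_inv_val] at h
  exact h

theorem bessel_FT_dilate_inv (k : ℝ) (a : ℝˣ) (g : 𝓢(E d, ℂ)) (x : E d) :
    bessel d k (FT d (dilate a⁻¹ g)) x =
      (|(a : ℝ) ^ d| : ℝ) * FT d (bracketMul k a g) ((a : ℝ) • x) := by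
  rw [bessel_FT_schwartz, bracketMul_dilate, FT_dilate_inv]

theorem support_FT_dilate_inv_subset {a : ℝˣ} (ha : 1 ≤ (a : ℝ)) {g : 𝓢(E d, ℂ)}
    (hg : Function.support (𝓕 (g : E d → ℂ)) ⊆ closedBall 0 (2 * π)⁻¹) :
    Function.support (FT d (dilate a⁻¹ g)) ⊆ closedBall 0 1 := by
  intro ξ hξ
  rw [Function.mem_support, FT_dilate_inv, FT_eq_fourier] at hξ
  have hmem := mem_closedBall_zero_iff.1 (hg (right_ne_zero_of_mul hξ))
  have ha0 : 0 ≤ (a : ℝ) := by linarith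
  rw [norm_smul, norm_smul, Real.norm_of_nonneg (by positivity), Real.norm_of_nonneg ha0,
    mul_le_iff_le_one_right (by positivity)] at hmem
  exact mem_closedBall_zero_iff.2 ((le_mul_of_one_le_left (norm_nonneg ξ) ha).trans hmem)

theorem integral_norm_dilate_inv_rpow {a : ℝˣ} (ha : 0 < (a : ℝ)) (p : ℝ) (g : 𝓢(E d, ℂ)) :
    (∫ x, ‖dilate a⁻¹ g x‖ ^ p) ^ (1 / p) =
      (∫ x, ‖g x‖ ^ p) ^ (1 / p) * (a : ℝ) ^ (d / p) := by
  have hscale : ∫ x, ‖dilate a⁻¹ g x‖ ^ p = (a : ℝ) ^ d * ∫ x, ‖g x‖ ^ p := by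
    have h := Measure.integral_comp_inv_smul_of_nonneg (volume : Measure (E d))
      (fun x => ‖g x‖ ^ p) ha.le
    simpa only [dilate_apply, Units.val_inv_eq_inv_val, finrank_euclideanSpace, Fintype.card_fin,
      smul_eq_mul] using h
  rw [hscale, Real.mul_rpow (by positivity) (by positivity), ← Real.rpow_natCast_mul ha.le,
    mul_one_div, mul_comm]

theorem exists_forall_mul_rpow_le_norm_FT_bracketMul (hd : 1 ≤ d) (k : ℝ) (hg : g ≠ 0)
    (hg0 : ∀ x, 0 ≤ g x) :
    ∃ c > 0, ∃ δ > 0, ∀ r : ℝ, 1 ≤ r → ∀ x : E d, ‖x‖ ≤ δ →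
      c * r ^ k ≤ ‖FT d (bracketMul k r g) x‖ := by
  have : NeZero d := ⟨by omega⟩
  obtain ⟨c, hc, hlower⟩ :=
    exists_forall_mul_rpow_le_integral_norm_bracketMul (μ := volume) k hg
  obtain ⟨K, hK⟩ := exists_forall_integral_norm_mul_norm_bracketMul_le (μ := volume) k hg
  refine ⟨c / 2, by positivity, (2 * (|K| + 1))⁻¹, by positivity, fun r hr x hx => ?_⟩
  have hxK : ‖x‖ * K ≤ 1 / 2 :=
    calc ‖x‖ * K ≤ ‖x‖ * (|K| + 1) := by
          gcongr
          linarith [le_abs_self K]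
      _ ≤ (2 * (|K| + 1))⁻¹ * (|K| + 1) := by gcongr
      _ = 1 / 2 := by field_simp
  have hnonneg (ξ : E d) : 0 ≤ bracketMul k r g ξ := by
    rw [bracketMul_apply, real_smul]
    exact mul_nonneg
      (zero_le_real.2 (Real.rpow_nonneg (japaneseBracket_pos _).le k)) (hg0 ξ)
  have := integral_norm_le_two_mul_norm_FT hnonneg (bracketMul k r g).integrable
    (by simpa only [pow_one] using (bracketMul k r g).integrable_pow_mul volume 1) (hK r hr) hxK
  linarith [hlower r hr]

theorem exists_forall_mul_rpow_le_integral_norm_bessel_rpow (hd : 1 ≤ d) (k : ℝ) (hg : g ≠ 0)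
    (hg0 : ∀ x, 0 ≤ g x) {p : ℝ} (hp : 0 < p) :
    ∃ c > 0, ∀ a : ℝˣ, 1 ≤ (a : ℝ) →
      c * (a : ℝ) ^ (d + k - d / p) ≤
        (∫ x, ‖bessel d k (FT d (dilate a⁻¹ g)) x‖ ^ p) ^ (1 / p) := by
  obtain ⟨c, hc, δ, hδ, hlower⟩ := exists_forall_mul_rpow_le_norm_FT_bracketMul hd k hg hg0
  set v := (volume : Measure (E d)).real (closedBall 0 δ)
  have hv : 0 < v :=
    ENNReal.toReal_pos (measure_closedBall_pos volume 0 hδ).ne' measure_closedBall_lt_top.ne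
  refine ⟨c * v ^ (1 / p), by positivity, fun a ha => ?_⟩
  have ha0 : 0 < (a : ℝ) := by linarith
  have hbound (x : E d) (hx : x ∈ closedBall 0 ((a : ℝ)⁻¹ * δ)) :
      (a : ℝ) ^ d * (c * (a : ℝ) ^ k) ≤ ‖bessel d k (FT d (dilate a⁻¹ g)) x‖ := by
    rw [bessel_FT_dilate_inv, norm_mul, norm_real, norm_abs_eq_norm,
      Real.norm_of_nonneg (by positivity)]
    gcongr
    refine hlower a ha _ ?_
    rwa [norm_smul, Real.norm_of_nonneg ha0.le, ← le_inv_mul_iff₀ ha0, ← mem_closedBall_zero_iff]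
  have hvol : (volume : Measure (E d)).real (closedBall 0 ((a : ℝ)⁻¹ * δ)) =
      ((a : ℝ) ^ d)⁻¹ * v := by
    rw [measureReal_def, Measure.addHaar_closedBall_mul_of_pos volume 0 (inv_pos.2 ha0) δ,
      ENNReal.toReal_mul, ENNReal.toReal_ofReal (by positivity), finrank_euclideanSpace,
      Fintype.card_fin, inv_pow, ← measureReal_def]
  have hint : Integrable fun x => ‖bessel d k (FT d (dilate a⁻¹ g)) x‖ ^ p := by
    simpa only [bessel_FT_schwartz] using integrable_norm_FT_rpow _ hp
  calc c * v ^ (1 / p) * (a : ℝ) ^ (d + k - d / p)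
      = (a : ℝ) ^ d * (c * (a : ℝ) ^ k) * (((a : ℝ) ^ d)⁻¹ * v) ^ (1 / p) := by
        rw [Real.mul_rpow (by positivity) hv.le, Real.inv_rpow (by positivity),
          ← Real.rpow_natCast_mul ha0.le, mul_one_div, Real.rpow_sub ha0, Real.rpow_add ha0,
          Real.rpow_natCast]
        ring
    _ ≤ _ := by
        rw [← hvol]
        exact mul_measureReal_rpow_le_integral_norm_rpow hp (by positivity) measurableSet_closedBall
          measure_closedBall_lt_top.ne hint hbound

end DilatedFamily

theorem stmt18_general (d : ℕ) (hd : 1 ≤ d) (p : ℝ) (hp : 0 < p) (k₂ : ℝ)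
    (h : ∃ C > (0 : ℝ), ∀ f : SchwartzMap (E d) ℂ,
      Function.support (FT d (⇑f)) ⊆ Metric.closedBall (0 : E d) 1 →
      (∫ x : E d, ‖bessel d k₂ (FT d (⇑f)) x‖ ^ p) ^ (1 / p) ≤
        C * (∫ x : E d, ‖f x‖ ^ p) ^ (1 / p)) :
    k₂ ≤ -(2 * d * (1 / 2 - 1 / p)) := by
  obtain ⟨C, -, h⟩ := h
  obtain ⟨g, hg, hg0, hsupp⟩ :=
    exists_nonneg_schwartz_support_fourier_subset_closedBall (V := E d) (inv_pos.2 two_pi_pos)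
  obtain ⟨c, hc, hlower⟩ := exists_forall_mul_rpow_le_integral_norm_bessel_rpow hd k₂ hg hg0 hp
  have hexp : d + k₂ - d / p ≤ d / p := by
    refine le_of_forall_mul_rpow_le_mul_rpow (K := C * (∫ x, ‖g x‖ ^ p) ^ (1 / p)) hc fun r hr => ?_
    have hr0 : 0 < r := by linarith
    let a := Units.mk0 r hr0.ne'
    calc c * r ^ (d + k₂ - d / p)
        ≤ (∫ x, ‖bessel d k₂ (FT d (dilate a⁻¹ g)) x‖ ^ p) ^ (1 / p) := hlower a hr
      _ ≤ C * (∫ x, ‖dilate a⁻¹ g x‖ ^ p) ^ (1 / p) := h _ (support_FT_dilate_inv_subset hr hsupp)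
      _ = C * (∫ x, ‖g x‖ ^ p) ^ (1 / p) * r ^ (d / p) := by
          rw [integral_norm_dilate_inv_rpow (a := a) hr0, ← mul_assoc]
          rfl
  rw [show -(2 * d * (1 / 2 - 1 / p)) = d / p + d / p - d by ring]
  linarith

/-- necessity of the loss for `2 ≤ p < ∞`: if
`‖(1-Δ)^{k₂/2}(ℱf)‖_{L^p} ≤ C·‖f‖_{L^p}` for all Schwartz `f` with `ℱf` supported
in the closed unit ball, then `k₂ ≤ -2d(1/2 - 1/p)`. -/
theorem stmt18 (d : ℕ) (hd : 1 ≤ d) (p : ℝ) (hp : 2 ≤ p) (k₂ : ℝ)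
    (h : ∃ C > (0 : ℝ), ∀ f : SchwartzMap (E d) ℂ,
      Function.support (FT d (⇑f)) ⊆ Metric.closedBall (0 : E d) 1 →
      (∫ x : E d, ‖bessel d k₂ (FT d (⇑f)) x‖ ^ p) ^ (1 / p) ≤
        C * (∫ x : E d, ‖f x‖ ^ p) ^ (1 / p)) :
    k₂ ≤ -(2 * d * (1 / 2 - 1 / p)) :=
  stmt18_general d hd p (by linarith) k₂ h
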